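/- arXiv:math/0510601 — 3 statements merged into one kernel-verified Lean document; each statement's English description precedes it below -/
import Mathlib

section
/- Let X be a Polish space, d a lower semicontinuous metric on X, p ≥ 1, and μ a Borel probability measure on X. Suppose γ is in the class C and ∫ exp[ γ( d(x_o,y)^p ) ] μ(dy) ≤ B < ∞ for some x_o ∈ X. Then the function t ↦ max(0, 2γ(2^{−p} t) − 2 log B) is a transportation function for the cost c = d^p; that is, 2γ(2^{−p} T_{d^p}(μ,ν)) − 2 log B ≤ H(ν|μ) for every Borel probability measure ν on X. -/
open MeasureTheory ENNReal Set
open scoped NNReal ENNReal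

noncomputable section

/-- The class 𝒞 of convex, nondecreasing, left continuous functions vanishing at 0,
extended to `ℝ≥0∞` (left continuity at `∞` encodes the convention `α ∞ = lim α`). -/
def ClassCFun (α : ℝ≥0∞ → ℝ≥0∞) : Prop :=
  Monotone α ∧ α 0 = 0 ∧
    (∀ (s t : ℝ≥0∞) (p q : ℝ≥0), p + q = 1 →
      α ((p : ℝ≥0∞) * s + (q : ℝ≥0∞) * t) ≤ (p : ℝ≥0∞) * α s + (q : ℝ≥0∞) * α t) ∧
    ∀ x : ℝ≥0∞, x ≠ 0 → α x = ⨆ y ∈ Set.Iio x, α y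

open scoped Classical in
/-- Relative entropy `H(ν|μ)`. -/
def relEntropy {X : Type*} [MeasurableSpace X] (ν μ : Measure X) : ℝ≥0∞ :=
  if ν ≪ μ ∧ Integrable (fun x => Real.log (ν.rnDeriv μ x).toReal) ν
  then ENNReal.ofReal (∫ x, Real.log (ν.rnDeriv μ x).toReal ∂ν) else ⊤

/-- Optimal transportation cost for the cost function `c`. -/
def optTransportCost {X : Type*} [MeasurableSpace X] (c : X → X → ℝ)
    (μ ν : Measure X) : ℝ≥0∞ :=
  ⨅ (π : Measure (X × X)) (_ : π.map Prod.fst = μ ∧ π.map Prod.snd = ν),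
    ∫⁻ p, ENNReal.ofReal (c p.1 p.2) ∂π

/-- Extended exponential `ℝ≥0∞ → ℝ≥0∞`. -/
def expEN (v : ℝ≥0∞) : ℝ≥0∞ := if v = ⊤ then ⊤ else ENNReal.ofReal (Real.exp v.toReal)

/-!
Bound the transport cost by the product coupling `μ ⊗ ν`: the triangle inequality through `x₀` and
the convexity of `t ↦ t ^ p` give `2 * 2⁻ᵖ * d x y ^ p ≤ d x₀ x ^ p + d x₀ y ^ p`. As `γ` is
convex, twice the value of `γ` at `2⁻ᵖ * 𝒯(μ, ν)` is then at most the sum of its values at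
`∫ d(x₀, ·)ᵖ dμ` and `∫ d(x₀, ·)ᵖ dν`. By Jensen's inequality these two values are at most
`∫ γ(d(x₀, ·)ᵖ) dμ` and `∫ γ(d(x₀, ·)ᵖ) dν`, which the variational inequality
`∫ f dρ ≤ H(ρ|μ) + log ∫ exp f dμ` bounds, once with `ρ = μ` and once with `ρ = ν`.
-/

lemma convexOn_exists_supporting_slope {S : Set ℝ} {φ : ℝ → ℝ} (hφ : ConvexOn ℝ S φ) {y : ℝ}
    (hy : y ∈ interior S) : ∃ a : ℝ, ∀ z ∈ S, φ y + a * (z - y) ≤ φ z := by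
  refine ⟨derivWithin φ (Ioi y) y, fun z hz => ?_⟩
  rcases lt_trichotomy y z with hyz | rfl | hzy
  · have hslope := hφ.rightDeriv_le_slope_of_mem_interior hy hz hyz
    rw [slope_def_field, le_div_iff₀ (sub_pos.2 hyz)] at hslope
    linarith
  · simp
  · have hslope := (hφ.slope_le_leftDeriv_of_mem_interior hz hy hzy).trans
      (hφ.leftDeriv_le_rightDeriv_of_mem_interior hy)
    rw [slope_def_field, div_le_iff₀ (sub_pos.2 hzy)] at hslope
    linarith

namespace ClassCFun

variable {γ : ℝ≥0∞ → ℝ≥0∞}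

lemma monotone (hγ : ClassCFun γ) : Monotone γ := hγ.1

lemma map_zero (hγ : ClassCFun γ) : γ 0 = 0 := hγ.2.1

lemma map_add_le (hγ : ClassCFun γ) (s t : ℝ≥0∞) {p q : ℝ≥0} (hpq : p + q = 1) :
    γ (p * s + q * t) ≤ p * γ s + q * γ t :=
  hγ.2.2.1 s t p q hpq

lemma eq_biSup (hγ : ClassCFun γ) {x : ℝ≥0∞} (hx : x ≠ 0) : γ x = ⨆ y ∈ Iio x, γ y :=
  hγ.2.2.2 x hx

lemma two_mul_le_add (hγ : ClassCFun γ) {r s t : ℝ≥0∞} (h : 2 * r ≤ s + t) :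
    2 * γ r ≤ γ s + γ t := by
  have two_mul_half (v : ℝ≥0∞) : 2 * (((2⁻¹ : ℝ≥0) : ℝ≥0∞) * v) = v := by
    rw [ENNReal.coe_inv two_ne_zero, ENNReal.coe_ofNat, ← mul_assoc,
      ENNReal.mul_inv_cancel two_ne_zero ofNat_ne_top, one_mul]
  have hr : r ≤ ((2⁻¹ : ℝ≥0) : ℝ≥0∞) * s + ((2⁻¹ : ℝ≥0) : ℝ≥0∞) * t := by
    rwa [← ENNReal.mul_le_mul_iff_right two_ne_zero ofNat_ne_top, mul_add, two_mul_half,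
      two_mul_half]
  calc 2 * γ r
      ≤ 2 * (((2⁻¹ : ℝ≥0) : ℝ≥0∞) * γ s + ((2⁻¹ : ℝ≥0) : ℝ≥0∞) * γ t) := by
        gcongr
        exact (hγ.monotone hr).trans (hγ.map_add_le s t (by norm_num))
    _ = γ s + γ t := by rw [mul_add, two_mul_half, two_mul_half]

lemma eq_zero_of_map_top_ne_top (hγ : ClassCFun γ) (htop : γ ⊤ ≠ ⊤) : γ = 0 := by
  have hdouble : 2 * γ ⊤ ≤ γ ⊤ := by
    simpa only [hγ.map_zero, add_zero] using hγ.two_mul_le_add (r := ⊤) (s := ⊤) (t := 0) (by simp)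
  have hzero : γ ⊤ = 0 := by
    rw [two_mul] at hdouble
    exact nonpos_iff_eq_zero.1 <|
      (ENNReal.add_le_add_iff_left htop).1 (hdouble.trans_eq (add_zero _).symm)
  exact funext fun x => nonpos_iff_eq_zero.1 ((hγ.monotone le_top).trans_eq hzero)

lemma convexOn_toReal (hγ : ClassCFun γ) :
    ConvexOn ℝ {x : ℝ | 0 ≤ x ∧ γ (ENNReal.ofReal x) ≠ ⊤}
      (fun x => (γ (ENNReal.ofReal x)).toReal) := by
  have hle {x y a b : ℝ} (hx : 0 ≤ x) (hy : 0 ≤ y) (ha : 0 ≤ a) (hb : 0 ≤ b) (hab : a + b = 1) :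
      γ (ENNReal.ofReal (a • x + b • y)) ≤
        ENNReal.ofReal a * γ (ENNReal.ofReal x) + ENNReal.ofReal b * γ (ENNReal.ofReal y) := by
    rw [smul_eq_mul, smul_eq_mul, ENNReal.ofReal_add (by positivity) (by positivity),
      ENNReal.ofReal_mul ha, ENNReal.ofReal_mul hb]
    exact hγ.map_add_le _ _ (by rw [← Real.toNNReal_add ha hb, hab, Real.toNNReal_one])
  have hfin {s : ℝ≥0∞} (hs : s ≠ ⊤) (a : ℝ) : ENNReal.ofReal a * s ≠ ⊤ :=
    ENNReal.mul_ne_top ofReal_ne_top hs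
  refine ⟨fun x hx y hy a b ha hb hab => ⟨?_, ?_⟩, fun x hx y hy a b ha hb hab => ?_⟩
  · exact add_nonneg (mul_nonneg ha hx.1) (mul_nonneg hb hy.1)
  · exact ne_top_of_le_ne_top (add_ne_top.2 ⟨hfin hx.2 a, hfin hy.2 b⟩) (hle hx.1 hy.1 ha hb hab)
  · have hreal := toReal_mono (add_ne_top.2 ⟨hfin hx.2 a, hfin hy.2 b⟩)
      (hle hx.1 hy.1 ha hb hab)
    rwa [toReal_add (hfin hx.2 a) (hfin hy.2 b), toReal_mul, toReal_mul, toReal_ofReal ha,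
      toReal_ofReal hb] at hreal

lemma exists_supporting_slope_toReal (hγ : ClassCFun γ) {y w : ℝ} (hy : 0 < y) (hyw : y < w)
    (hw : γ (ENNReal.ofReal w) ≠ ⊤) :
    ∃ a : ℝ, 0 ≤ a ∧ ∀ z : ℝ, 0 ≤ z → γ (ENNReal.ofReal z) ≠ ⊤ →
      (γ (ENNReal.ofReal y)).toReal + a * (z - y) ≤ (γ (ENNReal.ofReal z)).toReal := by
  have hsub : Icc 0 w ⊆ {x : ℝ | 0 ≤ x ∧ γ (ENNReal.ofReal x) ≠ ⊤} := fun x hx =>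
    ⟨hx.1, ne_top_of_le_ne_top hw (hγ.monotone (ofReal_le_ofReal hx.2))⟩
  have hyint : y ∈ interior {x : ℝ | 0 ≤ x ∧ γ (ENNReal.ofReal x) ≠ ⊤} :=
    interior_mono hsub (by rw [interior_Icc]; exact ⟨hy, hyw⟩)
  obtain ⟨a, ha⟩ := convexOn_exists_supporting_slope hγ.convexOn_toReal hyint
  refine ⟨a, ?_, fun z hz hγz => ha z ⟨hz, hγz⟩⟩
  have hline := ha 0 (hsub ⟨le_rfl, (hy.trans hyw).le⟩)
  simp only [ENNReal.ofReal_zero, hγ.map_zero, toReal_zero, zero_sub] at hline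
  have hay : 0 ≤ a * y := by linarith [toReal_nonneg (a := γ (ENNReal.ofReal y))]
  exact nonneg_of_mul_nonneg_left hay hy

-- The supporting line is written without subtraction, which truncates in `ℝ≥0∞`.
lemma exists_supporting_slope (hγ : ClassCFun γ) {y w : ℝ≥0∞} (hyw : y < w) (hw : γ w ≠ ⊤) :
    ∃ a : ℝ≥0, ∀ z : ℝ≥0∞, γ y + a * z ≤ γ z + a * y := by
  by_cases htop : γ ⊤ = ⊤
  swap
  · exact ⟨0, fun z => by simp [hγ.eq_zero_of_map_top_ne_top htop]⟩
  rcases eq_or_ne y 0 with rfl | hy₀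
  · exact ⟨0, fun z => by simp [hγ.map_zero]⟩
  have hwtop : w ≠ ⊤ := fun h => hw (h ▸ htop)
  lift w to ℝ≥0 using hwtop
  lift y to ℝ≥0 using hyw.ne_top
  obtain ⟨a, ha, hline⟩ := hγ.exists_supporting_slope_toReal (y := y) (w := w)
    (by exact_mod_cast pos_iff_ne_zero.2 hy₀) (by exact_mod_cast hyw)
    (by rwa [ENNReal.ofReal_coe_nnreal])
  lift a to ℝ≥0 using ha
  have hγy : γ y ≠ ⊤ := ne_top_of_le_ne_top hw (hγ.monotone hyw.le)
  refine ⟨a, fun z => ?_⟩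
  by_cases hγz : γ z = ⊤
  · simp [hγz]
  lift z to ℝ≥0 using fun h => hγz (h ▸ htop)
  have hz := hline z z.2 (by rwa [ENNReal.ofReal_coe_nnreal])
  simp only [ENNReal.ofReal_coe_nnreal] at hz
  lift γ y to ℝ≥0 using hγy with γy
  lift γ z to ℝ≥0 using hγz with γz
  simp only [coe_toReal] at hz
  have hreal : (γy + a * z : ℝ) ≤ γz + a * y := by linarith
  exact_mod_cast hreal

lemma map_lintegral_le {X : Type*} [MeasurableSpace X] {μ : Measure X} [IsProbabilityMeasure μ]
    (hγ : ClassCFun γ) {g : X → ℝ≥0∞} (hg : AEMeasurable g μ) :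
    γ (∫⁻ x, g x ∂μ) ≤ ∫⁻ x, γ (g x) ∂μ := by
  by_cases hmean : ∫⁻ x, g x ∂μ = 0
  · simp [hmean, hγ.map_zero]
  by_cases htop : ∫⁻ x, γ (g x) ∂μ = ⊤
  · simp [htop]
  -- By left continuity it suffices to bound `γ` strictly below the mean, where `γ` has a supporting
  -- line because `g` exceeds `y` at a point with `γ (g x)` finite.
  rw [hγ.eq_biSup hmean]
  refine iSup₂_le fun y (hy : y < ∫⁻ x, g x ∂μ) => ?_
  obtain ⟨x, hyx, hx⟩ : ∃ x, y < g x ∧ γ (g x) ≠ ⊤ := by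
    by_contra! hcon
    refine hy.not_ge (lintegral_le_const ?_)
    filter_upwards [ae_lt_top' (hγ.monotone.measurable.comp_aemeasurable hg) htop] with x hx
    exact not_lt.1 fun hyx => hx.ne (hcon x hyx)
  obtain ⟨a, ha⟩ := hγ.exists_supporting_slope hyx hx
  have hay : (a : ℝ≥0∞) * y ≠ ⊤ := mul_ne_top coe_ne_top hy.ne_top
  refine (ENNReal.add_le_add_iff_right hay).1 ?_
  calc γ y + a * y ≤ γ y + a * ∫⁻ x, g x ∂μ := by gcongr
    _ = ∫⁻ x, (γ y + a * g x) ∂μ := by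
        rw [lintegral_add_left measurable_const, lintegral_const_mul'' _ hg, lintegral_const,
          measure_univ, mul_one]
    _ ≤ ∫⁻ x, (γ (g x) + a * y) ∂μ := lintegral_mono fun x => ha (g x)
    _ = ∫⁻ x, γ (g x) ∂μ + a * y := by
        rw [lintegral_add_right _ measurable_const, lintegral_const, measure_univ, mul_one]

end ClassCFun

section Entropy

variable {X : Type*} [MeasurableSpace X] {μ ν : Measure X}

lemma measurable_expEN : Measurable expEN :=
  Measurable.ite (measurableSet_singleton ⊤) measurable_const
    (measurable_toReal.exp.ennreal_ofReal)

lemma ofReal_exp_toReal_le_expEN (v : ℝ≥0∞) : ENNReal.ofReal (Real.exp v.toReal) ≤ expEN v := by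
  unfold expEN
  split_ifs
  exacts [le_top, le_rfl]

lemma relEntropy_of_ac_of_integrable (hac : ν ≪ μ) (hint : Integrable (llr ν μ) ν) :
    relEntropy ν μ = ENNReal.ofReal (∫ x, llr ν μ x ∂ν) :=
  if_pos ⟨hac, hint⟩

lemma relEntropy_ne_top_iff : relEntropy ν μ ≠ ⊤ ↔ ν ≪ μ ∧ Integrable (llr ν μ) ν := by
  refine ⟨fun h => ?_, fun h => ?_⟩
  · by_contra hcon
    exact h (if_neg hcon)
  · rw [relEntropy_of_ac_of_integrable h.1 h.2]
    exact ofReal_ne_top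

lemma relEntropy_self (μ : Measure X) [SigmaFinite μ] : relEntropy μ μ = 0 := by
  have hzero : llr μ μ =ᵐ[μ] 0 := llr_self μ
  rw [relEntropy_of_ac_of_integrable .rfl ((integrable_zero X ℝ μ).congr hzero.symm),
    integral_congr_ae hzero]
  simp

lemma lintegral_mul_ofReal_exp_neg_llr_le [SigmaFinite μ] [SigmaFinite ν] (hac : ν ≪ μ)
    {F : X → ℝ≥0∞} (hF : AEMeasurable F ν) :
    ∫⁻ x, F x * ENNReal.ofReal (Real.exp (-llr ν μ x)) ∂ν ≤ ∫⁻ x, F x ∂μ := by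
  calc ∫⁻ x, F x * ENNReal.ofReal (Real.exp (-llr ν μ x)) ∂ν
      = ∫⁻ x, (μ.rnDeriv ν * F) x ∂ν := by
        refine lintegral_congr_ae ?_
        filter_upwards [exp_neg_llr hac, μ.rnDeriv_lt_top ν] with x hx hxtop
        rw [hx, ofReal_toReal hxtop.ne, Pi.mul_apply, mul_comm]
    _ = ∫⁻ x, F x ∂(ν.withDensity (μ.rnDeriv ν)) :=
        (lintegral_withDensity_eq_lintegral_mul₀ (μ.measurable_rnDeriv ν).aemeasurable hF).symm
    _ ≤ ∫⁻ x, F x ∂μ := lintegral_mono' (Measure.withDensity_rnDeriv_le μ ν) le_rfl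

lemma lintegral_ofReal_exp_toReal_sub_llr_le [SigmaFinite μ] [SigmaFinite ν] (hac : ν ≪ μ)
    {f : X → ℝ≥0∞} (hf : AEMeasurable f ν) :
    ∫⁻ x, ENNReal.ofReal (Real.exp ((f x).toReal - llr ν μ x)) ∂ν ≤ ∫⁻ x, expEN (f x) ∂μ := by
  calc ∫⁻ x, ENNReal.ofReal (Real.exp ((f x).toReal - llr ν μ x)) ∂ν
      ≤ ∫⁻ x, expEN (f x) * ENNReal.ofReal (Real.exp (-llr ν μ x)) ∂ν := by
        refine lintegral_mono fun x => ?_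
        rw [sub_eq_add_neg, Real.exp_add, ENNReal.ofReal_mul (Real.exp_pos _).le]
        gcongr
        exact ofReal_exp_toReal_le_expEN (f x)
    _ ≤ ∫⁻ x, expEN (f x) ∂μ :=
        lintegral_mul_ofReal_exp_neg_llr_le hac (measurable_expEN.comp_aemeasurable hf)

lemma integrable_of_integrable_exp_sub {u L : X → ℝ} (hum : AEStronglyMeasurable u ν)
    (hu : 0 ≤ u) (hL : Integrable L ν) (hexp : Integrable (fun x => Real.exp (u x - L x)) ν) :
    Integrable u ν := by
  refine (hexp.add hL).mono' hum (.of_forall fun x => ?_)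
  rw [Real.norm_of_nonneg (hu x), Pi.add_apply]
  linarith [Real.add_one_le_exp (u x - L x)]

lemma integral_le_integral_add_log_integral_exp_sub [IsProbabilityMeasure ν] {u L : X → ℝ}
    (hu : Integrable u ν) (hL : Integrable L ν)
    (hexp : Integrable (fun x => Real.exp (u x - L x)) ν) :
    ∫ x, u x ∂ν ≤ ∫ x, L x ∂ν + Real.log (∫ x, Real.exp (u x - L x) ∂ν) := by
  have hjensen : Real.exp (∫ x, (u x - L x) ∂ν) ≤ ∫ x, Real.exp (u x - L x) ∂ν :=
    convexOn_exp.map_integral_le Real.continuous_exp.continuousOn isClosed_univ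
      (.of_forall fun _ => mem_univ _) (hu.sub hL) hexp
  rw [← Real.le_log_iff_exp_le (integral_exp_pos hexp), integral_sub hu hL] at hjensen
  linarith

lemma lintegral_le_relEntropy_add_log [SigmaFinite μ] [IsProbabilityMeasure ν] {f : X → ℝ≥0∞}
    (hf : AEMeasurable f μ) {B : ℝ} (hB : ∫⁻ x, expEN (f x) ∂μ ≤ ENNReal.ofReal B) :
    ∫⁻ x, f x ∂ν ≤ relEntropy ν μ + ENNReal.ofReal (Real.log B) := by
  by_cases hH : relEntropy ν μ = ⊤
  · simp [hH]
  obtain ⟨hac, hllr⟩ := relEntropy_ne_top_iff.1 hH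
  have hfν : AEMeasurable f ν := hf.mono_ac hac
  have hfin : ∀ᵐ x ∂ν, f x ≠ ⊤ := by
    filter_upwards [hac.ae_le (ae_lt_top' (measurable_expEN.comp_aemeasurable hf)
      (ne_top_of_le_ne_top ofReal_ne_top hB))] with x hx htop
    simp [htop, expEN] at hx
  have hlexp : ∫⁻ x, ENNReal.ofReal (Real.exp ((f x).toReal - llr ν μ x)) ∂ν ≤
      ENNReal.ofReal B :=
    (lintegral_ofReal_exp_toReal_sub_llr_le hac hfν).trans hB
  have hexp_nonneg : 0 ≤ᵐ[ν] fun x => Real.exp ((f x).toReal - llr ν μ x) :=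
    .of_forall fun x => (Real.exp_pos _).le
  have hexp : Integrable (fun x => Real.exp ((f x).toReal - llr ν μ x)) ν :=
    ⟨(hfν.ennreal_toReal.sub (measurable_llr ν μ).aemeasurable).exp.aestronglyMeasurable,
      (hasFiniteIntegral_iff_ofReal hexp_nonneg).2 (hlexp.trans_lt ofReal_lt_top)⟩
  have hexp_pos : 0 < ∫ x, Real.exp ((f x).toReal - llr ν μ x) ∂ν := integral_exp_pos hexp
  have hexp_le : ∫ x, Real.exp ((f x).toReal - llr ν μ x) ∂ν ≤ B := by
    rw [← ofReal_integral_eq_lintegral_ofReal hexp hexp_nonneg, ofReal_le_ofReal_iff'] at hlexp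
    exact hlexp.resolve_right hexp_pos.not_ge
  have hfint : Integrable (fun x => (f x).toReal) ν :=
    integrable_of_integrable_exp_sub hfν.ennreal_toReal.aestronglyMeasurable
      (fun _ => toReal_nonneg) hllr hexp
  calc ∫⁻ x, f x ∂ν = ENNReal.ofReal (∫ x, (f x).toReal ∂ν) := by
        rw [ofReal_integral_eq_lintegral_ofReal hfint (.of_forall fun _ => toReal_nonneg)]
        exact lintegral_congr_ae (hfin.mono fun x hx => (ofReal_toReal hx).symm)
    _ ≤ ENNReal.ofReal (∫ x, llr ν μ x ∂ν + Real.log B) := by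
        gcongr
        exact (integral_le_integral_add_log_integral_exp_sub hfint hllr hexp).trans (by gcongr)
    _ ≤ relEntropy ν μ + ENNReal.ofReal (Real.log B) := by
        rw [relEntropy_of_ac_of_integrable hac hllr]
        exact ofReal_add_le

end Entropy

section TransportCost

variable {X : Type*} [MeasurableSpace X] {μ ν : Measure X} [IsProbabilityMeasure μ]
  [IsProbabilityMeasure ν] {c : X → X → ℝ} {a : ℝ≥0∞}

lemma optTransportCost_le_lintegral_prod :
    optTransportCost c μ ν ≤ ∫⁻ q, ENNReal.ofReal (c q.1 q.2) ∂(μ.prod ν) :=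
  iInf₂_le (μ.prod ν) ⟨measurePreserving_fst.map_eq, measurePreserving_snd.map_eq⟩

lemma mul_optTransportCost_le_lintegral_add_lintegral {u v : X → ℝ≥0∞} (hu : AEMeasurable u μ)
    (hv : AEMeasurable v ν) (hc : ∀ x y, a * ENNReal.ofReal (c x y) ≤ u x + v y) :
    a * optTransportCost c μ ν ≤ ∫⁻ x, u x ∂μ + ∫⁻ y, v y ∂ν := by
  calc a * optTransportCost c μ ν
      ≤ a * ∫⁻ q, ENNReal.ofReal (c q.1 q.2) ∂(μ.prod ν) := by
        gcongr
        exact optTransportCost_le_lintegral_prod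
    _ ≤ ∫⁻ q, a * ENNReal.ofReal (c q.1 q.2) ∂(μ.prod ν) := lintegral_const_mul_le _ _
    _ ≤ ∫⁻ q, (u q.1 + v q.2) ∂(μ.prod ν) := lintegral_mono fun q => hc q.1 q.2
    _ = ∫⁻ x, u x ∂μ + ∫⁻ y, v y ∂ν := by
        rw [lintegral_add_left' hu.comp_fst, lintegral_prod _ hu.comp_fst,
          lintegral_prod _ hv.comp_snd]
        simp

lemma two_mul_map_mul_optTransportCost_le {γ : ℝ≥0∞ → ℝ≥0∞} (hγ : ClassCFun γ)
    {χ : X → ℝ≥0∞} (hχ : AEMeasurable χ μ)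
    (hc : ∀ x y, 2 * a * ENNReal.ofReal (c x y) ≤ χ x + χ y)
    {B : ℝ} (hB : ∫⁻ y, expEN (γ (χ y)) ∂μ ≤ ENNReal.ofReal B) :
    2 * γ (a * optTransportCost c μ ν) ≤
      relEntropy ν μ + ENNReal.ofReal (2 * Real.log B) := by
  by_cases hH : relEntropy ν μ = ⊤
  · simp [hH]
  have hχν : AEMeasurable χ ν := hχ.mono_ac (relEntropy_ne_top_iff.1 hH).1
  have hcost : 2 * (a * optTransportCost c μ ν) ≤ ∫⁻ x, χ x ∂μ + ∫⁻ y, χ y ∂ν := by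
    rw [← mul_assoc]
    exact mul_optTransportCost_le_lintegral_add_lintegral hχ hχν hc
  have hγχ : AEMeasurable (fun x => γ (χ x)) μ := hγ.monotone.measurable.comp_aemeasurable hχ
  calc 2 * γ (a * optTransportCost c μ ν)
      ≤ γ (∫⁻ x, χ x ∂μ) + γ (∫⁻ y, χ y ∂ν) := hγ.two_mul_le_add hcost
    _ ≤ ∫⁻ x, γ (χ x) ∂μ + ∫⁻ y, γ (χ y) ∂ν :=
        add_le_add (hγ.map_lintegral_le hχ) (hγ.map_lintegral_le hχν)
    _ ≤ (relEntropy μ μ + ENNReal.ofReal (Real.log B)) +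
          (relEntropy ν μ + ENNReal.ofReal (Real.log B)) :=
        add_le_add (lintegral_le_relEntropy_add_log hγχ hB)
          (lintegral_le_relEntropy_add_log hγχ hB)
    _ = relEntropy ν μ + ENNReal.ofReal (2 * Real.log B) := by
        rw [relEntropy_self, ENNReal.ofReal_mul zero_le_two, ENNReal.ofReal_ofNat]
        ring

end TransportCost

lemma two_mul_two_rpow_neg_mul_rpow_le {a b c p : ℝ} (ha : 0 ≤ a) (hb : 0 ≤ b) (hc : 0 ≤ c)
    (hcab : c ≤ a + b) (hp : 1 ≤ p) : 2 * 2 ^ (-p) * c ^ p ≤ a ^ p + b ^ p := by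
  have hmid := (convexOn_rpow hp).2 (mem_Ici.2 ha) (mem_Ici.2 hb) one_half_pos.le one_half_pos.le
    (add_halves 1)
  simp only [smul_eq_mul] at hmid
  have hhalf : 2 ^ (-p) * c ^ p ≤ (1 / 2 * a + 1 / 2 * b) ^ p := by
    rw [Real.rpow_neg zero_le_two, ← Real.inv_rpow zero_le_two, ← Real.mul_rpow (by positivity) hc]
    exact Real.rpow_le_rpow (by positivity) (by linarith) (by linarith)
  linarith

theorem transportation_function_dp_general {X : Type*} [MeasurableSpace X] (d : X → X → ℝ)
    (hd_symm : ∀ x y, d x y = d y x) (hd_tri : ∀ x y z, d x z ≤ d x y + d y z)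
    (p : ℝ) (hp : 1 ≤ p) (μ : Measure X) [IsProbabilityMeasure μ]
    (γ : ℝ≥0∞ → ℝ≥0∞) (hγ : ClassCFun γ) (B : ℝ) (x₀ : X) (hd_meas : AEMeasurable (d x₀) μ)
    (hB : ∫⁻ y, expEN (γ (ENNReal.ofReal (d x₀ y ^ p))) ∂μ ≤ ENNReal.ofReal B)
    (ν : Measure X) [IsProbabilityMeasure ν] :
    2 * γ (ENNReal.ofReal ((2 : ℝ) ^ (-p)) * optTransportCost (fun x y => d x y ^ p) μ ν) ≤
      relEntropy ν μ + ENNReal.ofReal (2 * Real.log B) := by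
  have hd_nonneg (x y : X) : 0 ≤ d x y := by
    linarith [hd_tri x x x, hd_tri x y x, hd_symm x y]
  refine two_mul_map_mul_optTransportCost_le hγ (hd_meas.pow_const p).ennreal_ofReal
    (fun x y => ?_) hB
  have hcost : 2 * 2 ^ (-p) * d x y ^ p ≤ d x₀ x ^ p + d x₀ y ^ p :=
    two_mul_two_rpow_neg_mul_rpow_le (hd_nonneg _ _) (hd_nonneg _ _) (hd_nonneg _ _)
      (hd_symm x₀ x ▸ hd_tri x x₀ y) hp
  calc 2 * ENNReal.ofReal (2 ^ (-p)) * ENNReal.ofReal (d x y ^ p)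
      = ENNReal.ofReal (2 * 2 ^ (-p) * d x y ^ p) := by
        rw [ENNReal.ofReal_mul (by positivity), ENNReal.ofReal_mul zero_le_two,
          ENNReal.ofReal_ofNat]
    _ ≤ ENNReal.ofReal (d x₀ x ^ p + d x₀ y ^ p) := ofReal_le_ofReal hcost
    _ ≤ ENNReal.ofReal (d x₀ x ^ p) + ENNReal.ofReal (d x₀ y ^ p) := ofReal_add_le

/-- Integral criterion for the cost `c = d^p`: if `∫ exp[γ(d(x₀,y)^p)] dμ ≤ B` then
`2γ(2^{-p} 𝒯_{d^p}(μ,ν)) − 2 log B ≤ H(ν|μ)`. -/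
theorem transportation_function_dp
    {X : Type*} [TopologicalSpace X] [PolishSpace X] [MeasurableSpace X] [BorelSpace X]
    (d : X → X → ℝ)
    (hd_symm : ∀ x y, d x y = d y x)
    (hd_tri : ∀ x y z, d x z ≤ d x y + d y z)
    (hd_self : ∀ x, d x x = 0)
    (hd_sep : ∀ x y, d x y = 0 → x = y)
    (hd_nonneg : ∀ x y, 0 ≤ d x y)
    (hd_lsc : LowerSemicontinuous fun p : X × X => d p.1 p.2)
    (p : ℝ) (hp : 1 ≤ p)
    (μ : Measure X) [IsProbabilityMeasure μ]
    (γ : ℝ≥0∞ → ℝ≥0∞) (hγ : ClassCFun γ)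
    (B : ℝ) (x₀ : X)
    (hB : ∫⁻ y, expEN (γ (ENNReal.ofReal (d x₀ y ^ p))) ∂μ ≤ ENNReal.ofReal B) :
    ∀ ν : Measure X, IsProbabilityMeasure ν →
      2 * γ (ENNReal.ofReal ((2 : ℝ) ^ (-p)) *
          optTransportCost (fun x y => d x y ^ p) μ ν) ≤
        relEntropy ν μ + ENNReal.ofReal (2 * Real.log B) := by
  intro ν hν
  have hdx₀ : LowerSemicontinuous (d x₀) := hd_lsc.comp (Continuous.prodMk_right x₀)
  exact transportation_function_dp_general d hd_symm hd_tri p hp μ γ hγ B x₀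
    hdx₀.measurable.aemeasurable hB ν

end
end

section
/- Let X be a Polish space, μ a Borel probability measure on X, and c : X × X → [0,∞) a cost function satisfying c(x,x) = 0 for all x and c(x,y) ≤ χ(x) + χ(y) for all x,y, where χ is a nonnegative measurable function with ∫ e^{δ_o χ} dμ < ∞ for some δ_o > 0. Then the Orlicz norm ‖χ‖_ρ is finite and the function α_0(t) = (√(t/‖χ‖_ρ + 1) − 1)² is a transportation function for c and μ; that is, α_0(T_c(μ,ν)) ≤ H(ν|μ) for every Borel probability measure ν on X. In particular, for every a ≥ 0 such that ∫ e^{aχ} dμ ≤ 2, the function t ↦ (√(a t + 1) − 1)² is a transportation function for c and μ. -/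
open MeasureTheory ENNReal Set
open scoped NNReal ENNReal

noncomputable section

/-- Orlicz norm for the Young function `ρ(s) = e^{|s|} − 1`. -/
def orliczNormE {X : Type*} [MeasurableSpace X] (μ : Measure X) (φ : X → ℝ) : ℝ≥0∞ :=
  sInf {b : ℝ≥0∞ | 0 < b ∧ ∫⁻ x, ENNReal.ofReal (Real.exp (|φ x| / b.toReal)) ∂μ ≤ 2}

/-- Left-continuous increasing extension to `ℝ≥0∞` of a real function on `[0,∞)`. -/
def extFun (f : ℝ → ℝ) (v : ℝ≥0∞) : ℝ≥0∞ :=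
  ⨆ (t : ℝ≥0) (_ : (t : ℝ≥0∞) ≤ v), ENNReal.ofReal (f (t : ℝ))

/-!
Leave the common part of `μ` and `ν = f μ` in place and transport the remainders `(1 - f)⁺ μ` and
`(f - 1)⁺ μ` onto each other by a normalized product measure. As `c` vanishes on the diagonal and
`c(x, y) ≤ χ x + χ y`, this coupling gives `T_c(μ, ν) ≤ ∫ χ |f - 1| dμ`.

The function `klFun f = f log f + 1 - f`, whose `μ`-integral is the relative entropy, is the
Legendre transform of `y ↦ eʸ - 1`. Combined with `e^{sx} - 1 - sx ≤ s² (eˣ - 1 - x)` for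
`s ∈ [0, 1]` and `x ≥ 0`, Young's inequality at `± s a χ` yields
`s a T_c(μ, ν) ≤ H(ν|μ) + s² ∫ (e^{aχ} - 1) dμ ≤ H(ν|μ) + s²` as soon as `∫ e^{aχ} dμ ≤ 2`.
Taking `s = min (√(a T_c + 1) - 1) 1` gives the claim for `a`. By Fatou's lemma the infimum defining
a positive Orlicz norm is attained, so `a = 1 / ‖χ‖_ρ` is admissible.
-/

open InformationTheory Filter Topology

lemma exp_mul_le_one_sub_add_mul_exp {s : ℝ} (hs0 : 0 ≤ s) (hs1 : s ≤ 1) (x : ℝ) :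
    Real.exp (s * x) ≤ 1 - s + s * Real.exp x := by
  simpa using convexOn_exp.2 (mem_univ 0) (mem_univ x) (sub_nonneg.2 hs1) hs0 (by ring)

lemma exp_mul_sub_one_sub_le_sq_mul {s x : ℝ} (hs0 : 0 ≤ s) (hs1 : s ≤ 1) (hx : 0 ≤ x) :
    Real.exp (s * x) - 1 - s * x ≤ s ^ 2 * (Real.exp x - 1 - x) := by
  let g : ℝ → ℝ := fun y ↦ s ^ 2 * (Real.exp y - 1 - y) - (Real.exp (s * y) - 1 - s * y)
  have hg (y : ℝ) : HasDerivAt g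
      (s ^ 2 * (Real.exp y - 1) - (Real.exp (s * y) * (s * 1) - s * 1)) y :=
    ((((Real.hasDerivAt_exp y).sub_const 1).sub (hasDerivAt_id y)).const_mul (s ^ 2)).sub
      ((((hasDerivAt_id y).const_mul s).exp.sub_const 1).sub ((hasDerivAt_id y).const_mul s))
  have hg_mono : Monotone g := by
    refine monotone_of_deriv_nonneg (fun y ↦ (hg y).differentiableAt) fun y ↦ ?_
    rw [(hg y).deriv]
    nlinarith [mul_le_mul_of_nonneg_left (exp_mul_le_one_sub_add_mul_exp hs0 hs1 y) hs0]
  have hg0 : g 0 = 0 := by simp [g]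
  exact sub_nonneg.1 (hg0 ▸ hg_mono hx)

lemma mul_le_klFun_add_exp_sub_one {f : ℝ} (hf : 0 ≤ f) (y : ℝ) :
    f * y ≤ klFun f + (Real.exp y - 1) := by
  rw [klFun_apply]
  rcases hf.eq_or_lt with rfl | hf
  · simp [Real.exp_nonneg]
  · have h : y - Real.log f + 1 ≤ Real.exp y / f := by
      simpa [Real.exp_sub, Real.exp_log hf] using Real.add_one_le_exp (y - Real.log f)
    rw [le_div_iff₀ hf] at h
    linarith

lemma mul_abs_sub_one_le_klFun_add {f y : ℝ} (hf : 0 ≤ f) (hy : 0 ≤ y) :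
    y * |f - 1| ≤ klFun f + (Real.exp y - 1 - y) := by
  rcases le_total 0 (f - 1) with h | h
  · rw [abs_of_nonneg h]
    linarith [mul_le_klFun_add_exp_sub_one hf y]
  · have h_sinh : y ≤ (Real.exp y - Real.exp (-y)) / 2 :=
      Real.sinh_eq y ▸ Real.self_le_sinh_iff.2 hy
    rw [abs_of_nonpos h]
    linarith [mul_le_klFun_add_exp_sub_one hf (-y)]

lemma mul_mul_abs_sub_one_le_klFun_add_sq_mul {f s x : ℝ} (hf : 0 ≤ f) (hs0 : 0 ≤ s) (hs1 : s ≤ 1)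
    (hx : 0 ≤ x) : s * (x * |f - 1|) ≤ klFun f + s ^ 2 * (Real.exp x - 1) :=
  calc s * (x * |f - 1|) = s * x * |f - 1| := by ring
    _ ≤ klFun f + (Real.exp (s * x) - 1 - s * x) :=
      mul_abs_sub_one_le_klFun_add hf (mul_nonneg hs0 hx)
    _ ≤ klFun f + s ^ 2 * (Real.exp x - 1 - x) := by
      gcongr
      exact exp_mul_sub_one_sub_le_sq_mul hs0 hs1 hx
    _ ≤ klFun f + s ^ 2 * (Real.exp x - 1) := by linarith [mul_nonneg (sq_nonneg s) hx]

lemma sq_sqrt_add_one_sub_one_le {u H : ℝ} (hu : 0 ≤ u)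
    (h : ∀ s ∈ Icc (0 : ℝ) 1, s * u ≤ H + s ^ 2) : (√(u + 1) - 1) ^ 2 ≤ H := by
  have hr0 : 0 ≤ √(u + 1) - 1 := sub_nonneg.2 (Real.one_le_sqrt.2 (by linarith))
  have hru : (√(u + 1) - 1) ^ 2 + 2 * (√(u + 1) - 1) = u := by
    linear_combination Real.sq_sqrt (show 0 ≤ u + 1 by linarith)
  generalize √(u + 1) - 1 = r at hr0 hru ⊢
  rcases le_total r 1 with hr1 | hr1
  · have h_cube : 0 ≤ r ^ 3 := by positivity
    linear_combination h r ⟨hr0, hr1⟩ + r * hru + h_cube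
  · linarith [h 1 ⟨zero_le_one, le_rfl⟩]

lemma extFun_sq_sqrt_sub_one_le {a : ℝ} (ha : 0 ≤ a) {T H : ℝ≥0∞}
    (h : ∀ s ∈ Icc (0 : ℝ) 1, ENNReal.ofReal (s * a) * T ≤ H + ENNReal.ofReal (s ^ 2)) :
    extFun (fun t ↦ (√(a * t + 1) - 1) ^ 2) T ≤ H := by
  rcases eq_or_ne H ⊤ with rfl | hH
  · exact le_top
  refine iSup₂_le fun t ht ↦ ofReal_le_of_le_toReal ?_
  refine sq_sqrt_add_one_sub_one_le (by positivity) fun s hs ↦ ?_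
  have hs0 : 0 ≤ s := hs.1
  rw [← ofReal_le_ofReal_iff (by positivity), ofReal_add (by positivity) (by positivity),
    ofReal_toReal hH, ← mul_assoc, ofReal_mul (by positivity), ofReal_coe_nnreal]
  exact (by gcongr : ENNReal.ofReal (s * a) * t ≤ _).trans (h s hs)

section CommonPartCoupling

variable {X : Type*} [MeasurableSpace X]

lemma lintegral_prod_add {Y : Type*} [MeasurableSpace Y] {A : Measure X} {B : Measure Y}
    [IsFiniteMeasure A] [IsFiniteMeasure B] {g : X → ℝ≥0∞} {h : Y → ℝ≥0∞}
    (hg : AEMeasurable g A) (hh : AEMeasurable h B) :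
    ∫⁻ p, (g p.1 + h p.2) ∂(A.prod B) = B univ * ∫⁻ x, g x ∂A + A univ * ∫⁻ y, h y ∂B := by
  have hg_fst : AEMeasurable (fun p : X × Y ↦ g p.1) (A.prod B) :=
    hg.comp_quasiMeasurePreserving Measure.quasiMeasurePreserving_fst
  have hh_snd : AEMeasurable (fun p : X × Y ↦ h p.2) (A.prod B) :=
    hh.comp_quasiMeasurePreserving Measure.quasiMeasurePreserving_snd
  rw [lintegral_add_left' hg_fst, lintegral_prod _ hg_fst, lintegral_prod _ hh_snd]
  simp only [lintegral_const]
  rw [lintegral_mul_const' _ _ (measure_ne_top B _), mul_comm, mul_comm (A univ)]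

/-- The transport plan from `m + A` to `m + B`, for `A` and `B` of equal mass, that leaves the
common part `m` in place and spreads `A` over `B` by their normalized product. If `A = 0`, the
second term vanishes because the product does, although the normalizing factor is then infinite. -/
def commonPartCoupling (m A B : Measure X) : Measure (X × X) :=
  m.map (fun x ↦ (x, x)) + (A univ)⁻¹ • A.prod B

lemma inv_measure_univ_smul_measure_univ_smul (A : Measure X) [IsFiniteMeasure A] :
    (A univ)⁻¹ • A univ • A = A := by
  rcases eq_or_ne A 0 with rfl | hA
  · simp
  · rw [smul_smul, ENNReal.inv_mul_cancel (Measure.measure_univ_ne_zero.2 hA) (measure_ne_top A _),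
      one_smul]

variable {m A B : Measure X}

lemma map_fst_commonPartCoupling [IsFiniteMeasure A] [SFinite B] (hAB : A univ = B univ) :
    (commonPartCoupling m A B).map Prod.fst = m + A := by
  have h_diag : Measurable fun x : X ↦ (x, x) := by fun_prop
  rw [commonPartCoupling, Measure.map_add _ _ measurable_fst, Measure.map_smul,
    Measure.map_fst_prod, ← hAB, inv_measure_univ_smul_measure_univ_smul,
    Measure.map_map measurable_fst h_diag]
  exact congrArg (· + A) Measure.map_id

lemma map_snd_commonPartCoupling [IsFiniteMeasure B] (hAB : A univ = B univ) :
    (commonPartCoupling m A B).map Prod.snd = m + B := by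
  have h_diag : Measurable fun x : X ↦ (x, x) := by fun_prop
  rw [commonPartCoupling, Measure.map_add _ _ measurable_snd, Measure.map_smul,
    Measure.map_snd_prod, hAB, inv_measure_univ_smul_measure_univ_smul,
    Measure.map_map measurable_snd h_diag]
  exact congrArg (· + B) Measure.map_id

variable {c : X → X → ℝ} {χ : X → ℝ} [IsFiniteMeasure A] [IsFiniteMeasure B]

lemma lintegral_commonPartCoupling_le (hAB : A univ = B univ) (hcdiag : ∀ x, c x x = 0)
    (hcχ : ∀ x y, c x y ≤ χ x + χ y) (hχA : AEMeasurable χ A) (hχB : AEMeasurable χ B) :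
    ∫⁻ p, ENNReal.ofReal (c p.1 p.2) ∂(commonPartCoupling m A B) ≤
      ∫⁻ x, ENNReal.ofReal (χ x) ∂A + ∫⁻ x, ENNReal.ofReal (χ x) ∂B := by
  have h_diag : ∫⁻ p, ENNReal.ofReal (c p.1 p.2) ∂(m.map fun x ↦ (x, x)) = 0 :=
    le_antisymm ((lintegral_map_le _ _).trans (by simp [hcdiag])) zero_le
  have h_prod : ∫⁻ p, ENNReal.ofReal (c p.1 p.2) ∂(A.prod B) ≤
      A univ * (∫⁻ x, ENNReal.ofReal (χ x) ∂A + ∫⁻ x, ENNReal.ofReal (χ x) ∂B) :=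
    calc ∫⁻ p, ENNReal.ofReal (c p.1 p.2) ∂(A.prod B)
        ≤ ∫⁻ p, (ENNReal.ofReal (χ p.1) + ENNReal.ofReal (χ p.2)) ∂(A.prod B) :=
          lintegral_mono fun p ↦ (ofReal_le_ofReal (hcχ _ _)).trans ofReal_add_le
      _ = _ := by
          rw [lintegral_prod_add hχA.ennreal_ofReal hχB.ennreal_ofReal, ← hAB, mul_add]
  rw [commonPartCoupling, lintegral_add_measure, h_diag, zero_add, lintegral_smul_measure,
    smul_eq_mul]
  calc (A univ)⁻¹ * ∫⁻ p, ENNReal.ofReal (c p.1 p.2) ∂(A.prod B)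
      ≤ (A univ)⁻¹ * (A univ * _) := by gcongr
    _ ≤ _ := by
        rw [← mul_assoc]
        exact mul_le_of_le_one_left zero_le (ENNReal.inv_mul_le_one _)

lemma optTransportCost_add_add_le (hAB : A univ = B univ) (hcdiag : ∀ x, c x x = 0)
    (hcχ : ∀ x y, c x y ≤ χ x + χ y) (hχA : AEMeasurable χ A) (hχB : AEMeasurable χ B) :
    optTransportCost c (m + A) (m + B) ≤
      ∫⁻ x, ENNReal.ofReal (χ x) ∂A + ∫⁻ x, ENNReal.ofReal (χ x) ∂B :=
  (iInf₂_le (commonPartCoupling m A B)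
    ⟨map_fst_commonPartCoupling hAB, map_snd_commonPartCoupling hAB⟩).trans
    (lintegral_commonPartCoupling_le hAB hcdiag hcχ hχA hχB)

end CommonPartCoupling

section WeightedTotalVariation

lemma tsub_add_tsub_eq_ofReal_abs {a b : ℝ≥0∞} (ha : a ≠ ⊤) (hb : b ≠ ⊤) :
    a - b + (b - a) = ENNReal.ofReal |a.toReal - b.toReal| := by
  lift a to ℝ≥0 using ha
  lift b to ℝ≥0 using hb
  wlog hab : a ≤ b generalizing a b
  · rw [add_comm, this b a (le_of_not_ge hab), abs_sub_comm]
  · rw [coe_toReal, coe_toReal, abs_sub_comm, abs_of_nonneg (sub_nonneg.2 (by exact_mod_cast hab)),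
      ofReal_sub _ a.coe_nonneg, ofReal_coe_nnreal, ofReal_coe_nnreal,
      tsub_eq_zero_of_le (by exact_mod_cast hab), zero_add]

variable {X : Type*} [MeasurableSpace X] {μ ν : Measure X} {c : X → X → ℝ} {χ : X → ℝ}

lemma withDensity_min_add_withDensity_tsub {f g : X → ℝ≥0∞} (hf : Measurable f)
    (hg : Measurable g) :
    μ.withDensity (fun x ↦ min (f x) (g x)) + μ.withDensity (fun x ↦ f x - g x) =
      μ.withDensity f := by
  rw [← withDensity_add_left (hf.min hg)]
  congr 1 with x
  exact (add_comm _ _).trans tsub_add_min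

lemma optTransportCost_withDensity_le {f g : X → ℝ≥0∞} (hf : Measurable f) (hg : Measurable g)
    [IsFiniteMeasure (μ.withDensity f)] [IsFiniteMeasure (μ.withDensity g)]
    (hfg : μ.withDensity f univ = μ.withDensity g univ) (hcdiag : ∀ x, c x x = 0)
    (hcχ : ∀ x y, c x y ≤ χ x + χ y) (hχ : AEMeasurable χ μ) :
    optTransportCost c (μ.withDensity f) (μ.withDensity g) ≤
      ∫⁻ x, ENNReal.ofReal (χ x) * (f x - g x + (g x - f x)) ∂μ := by
  set m := μ.withDensity fun x ↦ min (f x) (g x)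
  set A := μ.withDensity fun x ↦ f x - g x with hA
  set B := μ.withDensity fun x ↦ g x - f x with hB
  have hmA : m + A = μ.withDensity f := withDensity_min_add_withDensity_tsub hf hg
  have hmB : m + B = μ.withDensity g := by
    simpa only [min_comm] using withDensity_min_add_withDensity_tsub (μ := μ) hg hf
  have : IsFiniteMeasure m := isFiniteMeasure_of_le _ (hmA ▸ Measure.le_add_right le_rfl)
  have : IsFiniteMeasure A := isFiniteMeasure_of_le _ (hmA ▸ Measure.le_add_left le_rfl)
  have : IsFiniteMeasure B := isFiniteMeasure_of_le _ (hmB ▸ Measure.le_add_left le_rfl)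
  have hAB : A univ = B univ := by
    rw [← hmA, ← hmB, Measure.add_apply, Measure.add_apply] at hfg
    exact (ENNReal.add_right_inj (measure_ne_top m univ)).1 hfg
  have hχA : AEMeasurable χ A := hχ.mono_ac (withDensity_absolutelyContinuous _ _)
  have hχB : AEMeasurable χ B := hχ.mono_ac (withDensity_absolutelyContinuous _ _)
  have hχm : AEMeasurable (fun x ↦ ENNReal.ofReal (χ x)) μ := hχ.ennreal_ofReal
  calc optTransportCost c (μ.withDensity f) (μ.withDensity g)
      = optTransportCost c (m + A) (m + B) := by rw [hmA, hmB]
    _ ≤ ∫⁻ x, ENNReal.ofReal (χ x) ∂A + ∫⁻ x, ENNReal.ofReal (χ x) ∂B :=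
        optTransportCost_add_add_le hAB hcdiag hcχ hχA hχB
    _ = ∫⁻ x, (f x - g x) * ENNReal.ofReal (χ x) ∂μ +
          ∫⁻ x, (g x - f x) * ENNReal.ofReal (χ x) ∂μ := by
        rw [hA, hB, lintegral_withDensity_eq_lintegral_mul₀ (by fun_prop) hχm,
          lintegral_withDensity_eq_lintegral_mul₀ (by fun_prop) hχm]
        rfl
    _ = ∫⁻ x, ENNReal.ofReal (χ x) * (f x - g x + (g x - f x)) ∂μ := by
        rw [← lintegral_add_left' (by fun_prop)]
        exact lintegral_congr fun x ↦ by ring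

lemma optTransportCost_le_lintegral_mul_abs_rnDeriv_sub_one [IsFiniteMeasure μ] [IsFiniteMeasure ν]
    (hμν : μ univ = ν univ) (hac : ν ≪ μ) (hcdiag : ∀ x, c x x = 0)
    (hcχ : ∀ x y, c x y ≤ χ x + χ y) (hχ : AEMeasurable χ μ) :
    optTransportCost c μ ν ≤
      ∫⁻ x, ENNReal.ofReal (χ x * |(ν.rnDeriv μ x).toReal - 1|) ∂μ := by
  have hμ : μ.withDensity 1 = μ := withDensity_one
  have : IsFiniteMeasure (μ.withDensity 1) := by rwa [hμ]
  have hν : μ.withDensity (ν.rnDeriv μ) = ν := Measure.withDensity_rnDeriv_eq ν μ hac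
  have h_cost := optTransportCost_withDensity_le (μ := μ) (f := 1) measurable_one
    (Measure.measurable_rnDeriv ν μ) (c := c) (χ := χ)
  simp only [hμ, hν] at h_cost
  refine (h_cost hμν hcdiag hcχ hχ).trans_eq (lintegral_congr_ae ?_)
  filter_upwards [Measure.rnDeriv_ne_top ν μ] with x hx
  rw [Pi.one_apply, tsub_add_tsub_eq_ofReal_abs one_ne_top hx, abs_sub_comm, toReal_one,
    ofReal_mul' (abs_nonneg _)]

end WeightedTotalVariation

section Entropy

variable {X : Type*} [MeasurableSpace X] {μ ν : Measure X}

lemma relEntropy_eq_klDiv (h : ν univ = μ univ) : relEntropy ν μ = klDiv ν μ := by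
  classical
  rw [relEntropy, klDiv_def]
  exact if_ctx_congr Iff.rfl (fun _ ↦ by simp [llr_def, measureReal_def, h]) fun _ ↦ rfl

lemma lintegral_mul_abs_rnDeriv_sub_one_le [IsFiniteMeasure μ] [IsFiniteMeasure ν] (hac : ν ≪ μ)
    {φ : X → ℝ} (hφ : ∀ x, 0 ≤ φ x) {s : ℝ} (hs : s ∈ Icc (0 : ℝ) 1) :
    ∫⁻ x, ENNReal.ofReal (s * (φ x * |(ν.rnDeriv μ x).toReal - 1|)) ∂μ ≤
      klDiv ν μ + ENNReal.ofReal (s ^ 2) * ∫⁻ x, ENNReal.ofReal (Real.exp (φ x) - 1) ∂μ := by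
  have h_meas : Measurable fun x ↦ ENNReal.ofReal (klFun (ν.rnDeriv μ x).toReal) := by
    fun_prop
  calc ∫⁻ x, ENNReal.ofReal (s * (φ x * |(ν.rnDeriv μ x).toReal - 1|)) ∂μ
      ≤ ∫⁻ x, (ENNReal.ofReal (klFun (ν.rnDeriv μ x).toReal) +
          ENNReal.ofReal (s ^ 2) * ENNReal.ofReal (Real.exp (φ x) - 1)) ∂μ := by
        refine lintegral_mono fun x ↦ ?_
        rw [← ofReal_mul (sq_nonneg s)]
        exact (ofReal_le_ofReal (mul_mul_abs_sub_one_le_klFun_add_sq_mul toReal_nonneg hs.1 hs.2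
          (hφ x))).trans ofReal_add_le
    _ = klDiv ν μ + ENNReal.ofReal (s ^ 2) * ∫⁻ x, ENNReal.ofReal (Real.exp (φ x) - 1) ∂μ := by
        rw [lintegral_add_left h_meas, lintegral_const_mul' _ _ ofReal_ne_top,
          klDiv_eq_lintegral_klFun_of_ac hac]

lemma lintegral_exp_sub_one_le_one [IsProbabilityMeasure μ] {φ : X → ℝ} (hφ : ∀ x, 0 ≤ φ x)
    (h : ∫⁻ x, ENNReal.ofReal (Real.exp (φ x)) ∂μ ≤ 2) :
    ∫⁻ x, ENNReal.ofReal (Real.exp (φ x) - 1) ∂μ ≤ 1 := by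
  have h_one_le (x : X) : 1 ≤ ENNReal.ofReal (Real.exp (φ x)) :=
    one_le_ofReal.2 (Real.one_le_exp (hφ x))
  simp only [ofReal_sub _ zero_le_one, ofReal_one]
  rw [lintegral_sub measurable_const (by simp) (ae_of_all _ h_one_le), lintegral_one, measure_univ,
    tsub_le_iff_right, one_add_one_eq_two]
  exact h

variable {c : X → X → ℝ} {χ : X → ℝ} {a : ℝ}

lemma ofReal_mul_optTransportCost_le [IsFiniteMeasure μ] [IsFiniteMeasure ν]
    (hμν : μ univ = ν univ) (hcdiag : ∀ x, c x x = 0) (hχ : AEMeasurable χ μ) (hχ0 : ∀ x, 0 ≤ χ x)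
    (hcχ : ∀ x y, c x y ≤ χ x + χ y) (ha : 0 ≤ a) {s : ℝ} (hs : s ∈ Icc (0 : ℝ) 1) :
    ENNReal.ofReal (s * a) * optTransportCost c μ ν ≤
      klDiv ν μ + ENNReal.ofReal (s ^ 2) * ∫⁻ x, ENNReal.ofReal (Real.exp (a * χ x) - 1) ∂μ := by
  by_cases hac : ν ≪ μ
  swap
  · simp [hac]
  calc ENNReal.ofReal (s * a) * optTransportCost c μ ν
      ≤ ENNReal.ofReal (s * a) *
          ∫⁻ x, ENNReal.ofReal (χ x * |(ν.rnDeriv μ x).toReal - 1|) ∂μ := by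
        gcongr
        exact optTransportCost_le_lintegral_mul_abs_rnDeriv_sub_one hμν hac hcdiag hcχ hχ
    _ = ∫⁻ x, ENNReal.ofReal (s * (a * χ x * |(ν.rnDeriv μ x).toReal - 1|)) ∂μ := by
        rw [← lintegral_const_mul' _ _ ofReal_ne_top]
        simp only [← ofReal_mul (mul_nonneg hs.1 ha), mul_assoc]
    _ ≤ _ := lintegral_mul_abs_rnDeriv_sub_one_le hac (fun x ↦ mul_nonneg ha (hχ0 x)) hs

lemma extFun_optTransportCost_le_relEntropy [IsProbabilityMeasure μ] [IsProbabilityMeasure ν]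
    (hcdiag : ∀ x, c x x = 0) (hχ : AEMeasurable χ μ) (hχ0 : ∀ x, 0 ≤ χ x)
    (hcχ : ∀ x y, c x y ≤ χ x + χ y) (ha : 0 ≤ a)
    (hexp : ∫⁻ x, ENNReal.ofReal (Real.exp (a * χ x)) ∂μ ≤ 2) :
    extFun (fun t ↦ (√(a * t + 1) - 1) ^ 2) (optTransportCost c μ ν) ≤ relEntropy ν μ := by
  rw [relEntropy_eq_klDiv (by simp)]
  refine extFun_sq_sqrt_sub_one_le ha fun s hs ↦ ?_
  refine (ofReal_mul_optTransportCost_le (by simp) hcdiag hχ hχ0 hcχ ha hs).trans ?_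
  gcongr
  exact mul_le_of_le_one_right zero_le
    (lintegral_exp_sub_one_le_one (fun x ↦ mul_nonneg ha (hχ0 x)) hexp)

end Entropy

section OrliczNorm

variable {X : Type*} [MeasurableSpace X] {μ : Measure X} {φ : X → ℝ}

lemma exists_lintegral_exp_mul_le_two [IsProbabilityMeasure μ]
    (h : ∫⁻ x, ENNReal.ofReal (Real.exp (φ x)) ∂μ ≠ ⊤) :
    ∃ e : ℝ, 0 < e ∧ ∫⁻ x, ENNReal.ofReal (Real.exp (e * φ x)) ∂μ ≤ 2 := by
  set M := (∫⁻ x, ENNReal.ofReal (Real.exp (φ x)) ∂μ).toReal with hM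
  have hM0 : 0 ≤ M := toReal_nonneg
  have he0 : 0 < (M + 1)⁻¹ := by positivity
  have he1 : (M + 1)⁻¹ ≤ 1 := inv_le_one_of_one_le₀ (by linarith)
  have heM : (M + 1)⁻¹ * M ≤ 1 := by
    rw [inv_mul_le_iff₀ (by positivity)]
    linarith
  refine ⟨(M + 1)⁻¹, he0, ?_⟩
  generalize (M + 1)⁻¹ = e at he0 he1 heM
  calc ∫⁻ x, ENNReal.ofReal (Real.exp (e * φ x)) ∂μ
      ≤ ∫⁻ x, (1 + ENNReal.ofReal e * ENNReal.ofReal (Real.exp (φ x))) ∂μ := by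
        refine lintegral_mono fun x ↦ ?_
        rw [← ofReal_mul he0.le, ← ofReal_one]
        refine (ofReal_le_ofReal ?_).trans ofReal_add_le
        linarith [exp_mul_le_one_sub_add_mul_exp he0.le he1 (φ x)]
    _ = 1 + ENNReal.ofReal (e * M) := by
        rw [lintegral_add_left measurable_const, lintegral_const_mul' _ _ ofReal_ne_top,
          ofReal_mul he0.le, hM, ofReal_toReal h, lintegral_one, measure_univ]
    _ ≤ 1 + 1 := by
        gcongr
        exact ofReal_le_one.2 heM
    _ = 2 := one_add_one_eq_two

lemma orliczNormE_le_ofReal_inv {a : ℝ} (ha : 0 < a)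
    (h : ∫⁻ x, ENNReal.ofReal (Real.exp (a * |φ x|)) ∂μ ≤ 2) :
    orliczNormE μ φ ≤ ENNReal.ofReal a⁻¹ := by
  refine sInf_le ⟨ofReal_pos.2 (inv_pos.2 ha), ?_⟩
  simpa only [toReal_ofReal (inv_nonneg.2 ha.le), div_inv_eq_mul, mul_comm _ a] using h

lemma orliczNormE_lt_top [IsProbabilityMeasure μ] {δ : ℝ} (hδ : 0 < δ)
    (h : ∫⁻ x, ENNReal.ofReal (Real.exp (δ * |φ x|)) ∂μ ≠ ⊤) : orliczNormE μ φ < ⊤ := by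
  obtain ⟨e, he, h_le⟩ := exists_lintegral_exp_mul_le_two h
  simp only [← mul_assoc] at h_le
  exact (orliczNormE_le_ofReal_inv (mul_pos he hδ) h_le).trans_lt ofReal_lt_top

lemma lintegral_exp_abs_div_orliczNormE_le_two (hφ : AEMeasurable φ μ) (h0 : orliczNormE μ φ ≠ 0)
    (htop : orliczNormE μ φ ≠ ⊤) :
    ∫⁻ x, ENNReal.ofReal (Real.exp (|φ x| / (orliczNormE μ φ).toReal)) ∂μ ≤ 2 := by
  have h_nonempty : {b : ℝ≥0∞ | 0 < b ∧
      ∫⁻ x, ENNReal.ofReal (Real.exp (|φ x| / b.toReal)) ∂μ ≤ 2}.Nonempty := by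
    contrapose! htop
    rw [orliczNormE, htop, sInf_empty]
  obtain ⟨b, -, hb_lim, hb⟩ := exists_seq_tendsto_sInf h_nonempty (OrderBot.bddBelow _)
  have h_lim (x : X) : Tendsto (fun n ↦ ENNReal.ofReal (Real.exp (|φ x| / (b n).toReal))) atTop
      (𝓝 (ENNReal.ofReal (Real.exp (|φ x| / (orliczNormE μ φ).toReal)))) :=
    tendsto_ofReal <| (Real.continuous_exp.tendsto _).comp <|
      tendsto_const_nhds.div ((ENNReal.tendsto_toReal htop).comp hb_lim)
        (toReal_ne_zero.2 ⟨h0, htop⟩)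
  calc ∫⁻ x, ENNReal.ofReal (Real.exp (|φ x| / (orliczNormE μ φ).toReal)) ∂μ
      = ∫⁻ x, liminf (fun n ↦ ENNReal.ofReal (Real.exp (|φ x| / (b n).toReal))) atTop ∂μ :=
        lintegral_congr fun x ↦ (h_lim x).liminf_eq.symm
    _ ≤ liminf (fun n ↦ ∫⁻ x, ENNReal.ofReal (Real.exp (|φ x| / (b n).toReal)) ∂μ) atTop :=
        lintegral_liminf_le' fun n ↦ by fun_prop
    _ ≤ 2 := liminf_le_of_frequently_le' <| .of_forall fun n ↦ (hb n).2

end OrliczNorm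

theorem transportation_function_small_values_general
    {X : Type*} [MeasurableSpace X]
    (μ : Measure X) [IsProbabilityMeasure μ]
    (c : X → X → ℝ)
    (hc0 : ∀ x y, 0 ≤ c x y)
    (hcdiag : ∀ x, c x x = 0)
    (χ : X → ℝ) (hχ : AEMeasurable χ μ)
    (hcχ : ∀ x y, c x y ≤ χ x + χ y)
    (δ₀ : ℝ) (hδ₀ : 0 < δ₀)
    (hδexp : ∫⁻ x, ENNReal.ofReal (Real.exp (δ₀ * χ x)) ∂μ < ⊤) :
    orliczNormE μ χ < ⊤ ∧
      (∀ ν : Measure X, IsProbabilityMeasure ν →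
        extFun (fun t => (Real.sqrt (t / (orliczNormE μ χ).toReal + 1) - 1) ^ 2)
            (optTransportCost c μ ν) ≤ relEntropy ν μ) ∧
      ∀ a : ℝ, 0 ≤ a → (∫⁻ x, ENNReal.ofReal (Real.exp (a * χ x)) ∂μ) ≤ 2 →
        ∀ ν : Measure X, IsProbabilityMeasure ν →
          extFun (fun t => (Real.sqrt (a * t + 1) - 1) ^ 2)
              (optTransportCost c μ ν) ≤ relEntropy ν μ := by
  have hχ0 (x : X) : 0 ≤ χ x := by linarith [hc0 x x, hcχ x x]
  have h_norm : orliczNormE μ χ < ⊤ :=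
    orliczNormE_lt_top hδ₀ (by simpa only [abs_of_nonneg (hχ0 _)] using hδexp.ne)
  have h_exp : ∫⁻ x, ENNReal.ofReal (Real.exp ((orliczNormE μ χ).toReal⁻¹ * χ x)) ∂μ ≤ 2 := by
    -- If the norm is `0`, then so is its inverse, and the integrand is `1`.
    rcases eq_or_ne (orliczNormE μ χ) 0 with h0 | h0
    · simp [h0]
    · simpa only [abs_of_nonneg (hχ0 _), div_eq_inv_mul] using
        lintegral_exp_abs_div_orliczNormE_le_two hχ h0 h_norm.ne
  refine ⟨h_norm, fun ν _ ↦ ?_, fun a ha hexp ν _ ↦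
    extFun_optTransportCost_le_relEntropy hcdiag hχ hχ0 hcχ ha hexp⟩
  simpa only [div_eq_inv_mul] using extFun_optTransportCost_le_relEntropy hcdiag hχ hχ0 hcχ
    (inv_nonneg.2 toReal_nonneg) h_exp

/-- If `c(x,x) = 0`, `c ≤ χ ⊕ χ` and `∫ e^{δ₀ χ} dμ < ∞`, then `‖χ‖_ρ < ∞` and
`α₀(t) = (√(t/‖χ‖_ρ + 1) − 1)²` is a transportation function for `c` and `μ`;
in particular if `∫ e^{a χ} dμ ≤ 2` then `t ↦ (√(a t + 1) − 1)²` is one. -/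
theorem transportation_function_small_values
    {X : Type*} [TopologicalSpace X] [PolishSpace X] [MeasurableSpace X] [BorelSpace X]
    (μ : Measure X) [IsProbabilityMeasure μ]
    (c : X → X → ℝ)
    (hc0 : ∀ x y, 0 ≤ c x y)
    (hcdiag : ∀ x, c x x = 0)
    (χ : X → ℝ) (hχmeas : Measurable χ) (hχ0 : ∀ x, 0 ≤ χ x)
    (hcχ : ∀ x y, c x y ≤ χ x + χ y)
    (δ₀ : ℝ) (hδ₀ : 0 < δ₀)
    (hδexp : ∫⁻ x, ENNReal.ofReal (Real.exp (δ₀ * χ x)) ∂μ < ⊤) :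
    orliczNormE μ χ < ⊤ ∧
      (∀ ν : Measure X, IsProbabilityMeasure ν →
        extFun (fun t => (Real.sqrt (t / (orliczNormE μ χ).toReal + 1) - 1) ^ 2)
            (optTransportCost c μ ν) ≤ relEntropy ν μ) ∧
      ∀ a : ℝ, 0 ≤ a → (∫⁻ x, ENNReal.ofReal (Real.exp (a * χ x)) ∂μ) ≤ 2 →
        ∀ ν : Measure X, IsProbabilityMeasure ν →
          extFun (fun t => (Real.sqrt (a * t + 1) - 1) ^ 2)
              (optTransportCost c μ ν) ≤ relEntropy ν μ :=
  transportation_function_small_values_general μ c hc0 hcdiag χ hχmeas.aemeasurable hcχ δ₀ hδ₀ hδexp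

end
end

section
/- Let (X,d) be a Polish metric space and μ a Borel probability measure with ∫ d(x_o,x) μ(dx) < ∞ for all x_o ∈ X. Suppose α is in the class C, is unbounded, and the T_1-inequality α(T_d(μ,ν)) ≤ H(ν|μ) holds for all Borel probability measures ν on X. Then for every Borel set A with μ(A) > 0, setting r_A = inf{ r ≥ 0 : α(r) ≥ −log μ(A) }, one has the concentration inequality μ(A^r) ≥ 1 − e^{−α(r − r_A)} for all r ≥ r_A, where A^r = { x ∈ X : d(x,A) ≤ r } is the r-enlargement of A. -/
open MeasureTheory ENNReal Set
open scoped NNReal ENNReal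

noncomputable section

/-!
Condition `μ` on `A` and on the complement `B` of the enlargement `Aʳ`; the closure of `A`, which is
measurable and has the same enlargements, may stand in for `A`. Both conditioned measures have
explicit entropy with respect to `μ`, so the `T₁`-inequality gives
`α (T_d(μ, μ_A)) ≤ -log μ(A)` and `α (T_d(μ, μ_B)) ≤ -log μ(B)`. By convexity the first bound
forces `T_d(μ, μ_A) ≤ r_A`. Integrating the 1-Lipschitz function `d(·, A)` shows
`r ≤ T_d(μ, μ_A) + T_d(μ, μ_B)`, hence `α (r - r_A) ≤ -log μ(B)`.
-/

section Transport

variable {X : Type*} [MeasurableSpace X]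

lemma lintegral_le_lintegral_add_optTransportCost {c : X → X → ℝ} {f g : X → ℝ≥0∞}
    (hg : Measurable g) (hfg : ∀ x y, f x ≤ g y + ENNReal.ofReal (c x y)) (μ ν : Measure X) :
    ∫⁻ x, f x ∂μ ≤ ∫⁻ y, g y ∂ν + optTransportCost c μ ν := by
  simp only [optTransportCost, ENNReal.add_iInf, le_iInf_iff]
  rintro π ⟨rfl, rfl⟩
  calc ∫⁻ x, f x ∂π.map Prod.fst
      ≤ ∫⁻ p, f p.1 ∂π := lintegral_map_le f Prod.fst
    _ ≤ ∫⁻ p, g p.2 + ENNReal.ofReal (c p.1 p.2) ∂π := lintegral_mono fun p => hfg p.1 p.2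
    _ = ∫⁻ y, g y ∂π.map Prod.snd + ∫⁻ p, ENNReal.ofReal (c p.1 p.2) ∂π := by
      rw [lintegral_map hg measurable_snd]
      exact lintegral_add_left (hg.comp measurable_snd) _

lemma optTransportCost_le_swap {c : X → X → ℝ} (hc : ∀ x y, c x y = c y x) (μ ν : Measure X) :
    optTransportCost c μ ν ≤ optTransportCost c ν μ := by
  refine le_iInf₂ fun π hπ => iInf₂_le_of_le (π.map Prod.swap) ⟨?_, ?_⟩ ?_
  · rw [Measure.map_map measurable_fst measurable_swap]
    exact hπ.2
  · rw [Measure.map_map measurable_snd measurable_swap]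
    exact hπ.1
  · refine (lintegral_map_le _ _).trans (lintegral_mono fun p => ?_)
    rw [Prod.fst_swap, Prod.snd_swap, hc]

lemma optTransportCost_comm {c : X → X → ℝ} (hc : ∀ x y, c x y = c y x) (μ ν : Measure X) :
    optTransportCost c μ ν = optTransportCost c ν μ :=
  (optTransportCost_le_swap hc μ ν).antisymm (optTransportCost_le_swap hc ν μ)

end Transport

section Dist

variable {X : Type*} [PseudoMetricSpace X] [MeasurableSpace X] [OpensMeasurableSpace X]

lemma lintegral_infEDist_le_add_optTransportCost (A : Set X) (μ ν : Measure X) :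
    ∫⁻ x, Metric.infEDist x A ∂μ ≤ ∫⁻ x, Metric.infEDist x A ∂ν + optTransportCost dist μ ν :=
  lintegral_le_lintegral_add_optTransportCost Metric.continuous_infEDist.measurable
    (fun x y => edist_dist x y ▸ Metric.infEDist_le_infEDist_add_edist) μ ν

lemma le_optTransportCost_add_of_le_infEDist {A : Set X} {δ : ℝ≥0∞} (μ : Measure X)
    {ν₁ ν₂ : Measure X} [IsProbabilityMeasure ν₂] (h₁ : ∀ᵐ x ∂ν₁, x ∈ closure A)
    (h₂ : ∀ᵐ x ∂ν₂, δ ≤ Metric.infEDist x A) :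
    δ ≤ optTransportCost dist μ ν₁ + optTransportCost dist μ ν₂ := by
  have zero_on_ν₁ : ∫⁻ x, Metric.infEDist x A ∂ν₁ = 0 :=
    lintegral_eq_zero_of_ae_eq_zero
      (h₁.mono fun _ hx => Metric.mem_closure_iff_infEDist_zero.1 hx)
  calc δ = ∫⁻ _, δ ∂ν₂ := by rw [lintegral_const, measure_univ, mul_one]
    _ ≤ ∫⁻ x, Metric.infEDist x A ∂ν₂ := lintegral_mono_ae h₂
    _ ≤ ∫⁻ x, Metric.infEDist x A ∂μ + optTransportCost dist ν₂ μ :=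
      lintegral_infEDist_le_add_optTransportCost A ν₂ μ
    _ ≤ (∫⁻ x, Metric.infEDist x A ∂ν₁ + optTransportCost dist μ ν₁)
          + optTransportCost dist ν₂ μ := by
      gcongr
      exact lintegral_infEDist_le_add_optTransportCost A μ ν₁
    _ = optTransportCost dist μ ν₁ + optTransportCost dist μ ν₂ := by
      rw [zero_on_ν₁, zero_add, optTransportCost_comm dist_comm ν₂ μ]

end Dist

section Entropy

open scoped ProbabilityTheory

variable {X : Type*} [MeasurableSpace X]

lemma rnDeriv_cond (μ : Measure X) [SigmaFinite μ] {A : Set X} (hA : MeasurableSet A) :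
    μ[|A].rnDeriv μ =ᵐ[μ] A.indicator fun _ => (μ A)⁻¹ := by
  have cond_eq_withDensity : μ[|A] = μ.withDensity (A.indicator fun _ => (μ A)⁻¹) := by
    rw [withDensity_indicator hA, withDensity_const, ProbabilityTheory.cond]
  rw [cond_eq_withDensity]
  exact Measure.rnDeriv_withDensity μ (measurable_const.indicator hA)

lemma relEntropy_cond (μ : Measure X) [SigmaFinite μ] {A : Set X} (hA : MeasurableSet A)
    (hA₀ : μ A ≠ 0) (hA_top : μ A ≠ ⊤) :
    relEntropy μ[|A] μ = ENNReal.ofReal (-Real.log (μ A).toReal) := by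
  have : IsProbabilityMeasure μ[|A] :=
    ProbabilityTheory.cond_isProbabilityMeasure_of_finite hA₀ hA_top
  have hac : μ[|A] ≪ μ := ProbabilityTheory.cond_absolutelyContinuous
  have log_density : (fun x => Real.log (μ[|A].rnDeriv μ x).toReal)
      =ᵐ[μ[|A]] fun _ => -Real.log (μ A).toReal := by
    filter_upwards [hac.ae_le (rnDeriv_cond μ hA), ProbabilityTheory.ae_cond_mem hA] with x hx hxA
    rw [hx, indicator_of_mem hxA, ENNReal.toReal_inv, Real.log_inv]
  rw [relEntropy, if_pos ⟨hac, (integrable_const _).congr log_density.symm⟩,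
    integral_congr_ae log_density, integral_const, probReal_univ, one_smul]

end Entropy

lemma apply_top_eq_top_of_unbounded {α : ℝ≥0∞ → ℝ≥0∞} (hα : Monotone α)
    (hunb : ∀ r : ℝ, ∃ v, ENNReal.ofReal r < α v) : α ⊤ = ⊤ := by
  refine ENNReal.eq_top_of_forall_nnreal_le fun r => ?_
  obtain ⟨v, hv⟩ := hunb r
  rw [ENNReal.ofReal_coe_nnreal] at hv
  exact hv.le.trans (hα le_top)

/-- The generalized inverse `u ↦ inf {r ≥ 0 | u ≤ α r}`, with values in `ℝ`; it is only meaningful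
where `α` reaches the level `u` at a finite argument, and is `0` elsewhere. -/
def generalizedInverse (α : ℝ≥0∞ → ℝ≥0∞) (u : ℝ≥0∞) : ℝ :=
  sInf {r : ℝ | 0 ≤ r ∧ u ≤ α (ENNReal.ofReal r)}

lemma generalizedInverse_nonneg (α : ℝ≥0∞ → ℝ≥0∞) (u : ℝ≥0∞) : 0 ≤ generalizedInverse α u :=
  Real.sInf_nonneg fun _ hr => hr.1

namespace ClassCFun

variable {α : ℝ≥0∞ → ℝ≥0∞} {s t u : ℝ≥0∞}

lemma apply_mul_le (hα : ClassCFun α) {q : ℝ≥0} (hq : q ≤ 1) (t : ℝ≥0∞) :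
    α (q * t) ≤ q * α t := by
  obtain ⟨-, hα₀, hconv, -⟩ := hα
  simpa only [mul_zero, zero_add, hα₀] using hconv 0 t (1 - q) q (tsub_add_cancel_of_le hq)

lemma apply_lt_apply (hα : ClassCFun α) (hst : s < t) (hs₀ : α s ≠ 0) (hs_top : α s ≠ ⊤) :
    α s < α t := by
  -- `m` is finite even if `t = ⊤`, so the ratio `s / m` is a convexity weight.
  obtain ⟨m, hsm, hmt⟩ := exists_between hst
  have hm_top : m ≠ ⊤ := hmt.ne_top
  have hm₀ : m ≠ 0 := hsm.ne_bot
  refine lt_of_lt_of_le ?_ (hα.1 hmt.le)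
  by_contra! hms
  have hm_eq : α m = α s := hms.antisymm (hα.1 hsm.le)
  lift s / m to ℝ≥0 using ENNReal.div_ne_top hsm.ne_top hm₀ with q hq
  have hq_lt : (q : ℝ≥0∞) < 1 := by
    rw [hq]
    exact ENNReal.div_lt_of_lt_mul (by rwa [one_mul])
  have contraction : α s ≤ q * α s := calc
    α s = α (q * m) := by rw [hq, ENNReal.div_mul_cancel hm₀ hm_top]
    _ ≤ q * α s := hm_eq ▸ hα.apply_mul_le (ENNReal.coe_lt_one_iff.1 hq_lt).le m
  refine contraction.not_gt ?_
  simpa only [one_mul] using ENNReal.mul_lt_mul_left hs₀ hs_top hq_lt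

lemma exists_le_apply_ofReal (hα : ClassCFun α) (hα_top : α ⊤ = ⊤) (hu : u ≠ ⊤) :
    ∃ r : ℝ, 0 ≤ r ∧ u ≤ α (ENNReal.ofReal r) := by
  have hlt : u < ⨆ y ∈ Iio (⊤ : ℝ≥0∞), α y := by
    rw [← hα.2.2.2 ⊤ ENNReal.top_ne_zero, hα_top]
    exact hu.lt_top
  simp only [lt_iSup_iff] at hlt
  obtain ⟨v, hv_top, hv⟩ := hlt
  exact ⟨v.toReal, ENNReal.toReal_nonneg, by rw [ENNReal.ofReal_toReal hv_top.ne]; exact hv.le⟩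

lemma le_ofReal_generalizedInverse (hα : ClassCFun α) (hα_top : α ⊤ = ⊤) (hu₀ : u ≠ 0)
    (hu : u ≠ ⊤) (ht : α t ≤ u) : t ≤ ENNReal.ofReal (generalizedInverse α u) := by
  have ht_top : t ≠ ⊤ := by
    rintro rfl
    exact hu (top_le_iff.1 (hα_top ▸ ht))
  rw [ENNReal.le_ofReal_iff_toReal_le ht_top (generalizedInverse_nonneg α u)]
  refine le_csInf (hα.exists_le_apply_ofReal hα_top hu) fun r ⟨hr₀, hr⟩ => ?_
  refine ENNReal.toReal_le_of_le_ofReal hr₀ (le_of_not_gt fun hrt => ?_)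
  have hr_eq : α (ENNReal.ofReal r) = u := ((hα.1 hrt.le).trans ht).antisymm hr
  have hlt : u < α t := hr_eq ▸ hα.apply_lt_apply hrt (hr_eq.trans_ne hu₀) (hr_eq.trans_ne hu)
  exact ht.not_gt hlt

end ClassCFun

lemma le_inv_expEN_of_le_neg_log {p v : ℝ≥0∞} (hp : p ≤ 1)
    (hv : v ≤ ENNReal.ofReal (-Real.log p.toReal)) : p ≤ (expEN v)⁻¹ := by
  rcases eq_or_ne p 0 with rfl | hp₀
  · exact zero_le
  have hp_top : p ≠ ⊤ := ne_top_of_le_ne_top ENNReal.one_ne_top hp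
  have hp_pos : 0 < p.toReal := ENNReal.toReal_pos hp₀ hp_top
  have hlog : 0 ≤ -Real.log p.toReal :=
    neg_nonneg.2 (Real.log_nonpos hp_pos.le (ENNReal.toReal_le_of_le_ofReal one_pos.le (by simpa)))
  rw [expEN, if_neg (ne_top_of_le_ne_top ENNReal.ofReal_ne_top hv), ENNReal.le_inv_iff_le_inv]
  calc ENNReal.ofReal (Real.exp v.toReal)
      ≤ ENNReal.ofReal (Real.exp (-Real.log p.toReal)) := by
        gcongr
        exact ENNReal.toReal_le_of_le_ofReal hlog hv
    _ = p⁻¹ := by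
        rw [Real.exp_neg, Real.exp_log hp_pos, ENNReal.ofReal_inv_of_pos hp_pos,
          ENNReal.ofReal_toReal hp_top]

/-- The `T₁`-inequality `α (T_d(μ, ν)) ≤ H(ν|μ)` for all probability measures `ν`. -/
def T1Inequality {X : Type*} [PseudoMetricSpace X] [MeasurableSpace X] (α : ℝ≥0∞ → ℝ≥0∞)
    (μ : Measure X) : Prop :=
  ∀ ν : Measure X, IsProbabilityMeasure ν → α (optTransportCost dist μ ν) ≤ relEntropy ν μ

namespace T1Inequality

open scoped ProbabilityTheory

variable {X : Type*} [PseudoMetricSpace X] [MeasurableSpace X] {α : ℝ≥0∞ → ℝ≥0∞} {μ : Measure X}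

lemma apply_optTransportCost_cond_le [SigmaFinite μ] (hT1 : T1Inequality α μ) {A : Set X}
    (hA : MeasurableSet A) (hA₀ : μ A ≠ 0) (hA_top : μ A ≠ ⊤) :
    α (optTransportCost dist μ μ[|A]) ≤ ENNReal.ofReal (-Real.log (μ A).toReal) :=
  relEntropy_cond μ hA hA₀ hA_top ▸
    hT1 _ (ProbabilityTheory.cond_isProbabilityMeasure_of_finite hA₀ hA_top)

variable [OpensMeasurableSpace X] [IsProbabilityMeasure μ] {A : Set X}

lemma optTransportCost_cond_closure_le (hT1 : T1Inequality α μ) (hα : ClassCFun α)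
    (hα_top : α ⊤ = ⊤) (hA₀ : μ A ≠ 0) (hA₁ : μ A < 1) :
    optTransportCost dist μ μ[|closure A] ≤
      ENNReal.ofReal (generalizedInverse α (ENNReal.ofReal (-Real.log (μ A).toReal))) := by
  have hA_pos : 0 < (μ A).toReal := ENNReal.toReal_pos hA₀ hA₁.ne_top
  have hlog : 0 < -Real.log (μ A).toReal :=
    neg_pos.2 (Real.log_neg hA_pos (ENNReal.toReal_lt_of_lt_ofReal (by simpa)))
  have measure_le : μ A ≤ μ (closure A) := measure_mono subset_closure
  refine hα.le_ofReal_generalizedInverse hα_top (ENNReal.ofReal_pos.2 hlog).ne'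
    ENNReal.ofReal_ne_top ?_
  calc α (optTransportCost dist μ μ[|closure A])
      ≤ ENNReal.ofReal (-Real.log (μ (closure A)).toReal) :=
        hT1.apply_optTransportCost_cond_le isClosed_closure.measurableSet
          (ne_bot_of_le_ne_bot hA₀ measure_le) (measure_ne_top _ _)
    _ ≤ ENNReal.ofReal (-Real.log (μ A).toReal) := by
        gcongr
        exact measure_ne_top _ _

lemma apply_sub_generalizedInverse_le (hT1 : T1Inequality α μ) (hα : ClassCFun α)
    (hα_top : α ⊤ = ⊤) (hA₀ : μ A ≠ 0) {r : ℝ} (hB₀ : μ (Metric.cthickening r A)ᶜ ≠ 0) :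
    α (ENNReal.ofReal
        (r - generalizedInverse α (ENNReal.ofReal (-Real.log (μ A).toReal)))) ≤
      ENNReal.ofReal (-Real.log (μ (Metric.cthickening r A)ᶜ).toReal) := by
  set B := (Metric.cthickening r A)ᶜ
  have hB : MeasurableSet B := Metric.isClosed_cthickening.measurableSet.compl
  have hA₁ : μ A < 1 := by
    refine (measure_mono (Metric.self_subset_cthickening (δ := r) A)).trans_lt
      (lt_of_le_of_ne prob_le_one ?_)
    rwa [Ne, ← prob_compl_eq_zero_iff Metric.isClosed_cthickening.measurableSet]
  have : IsProbabilityMeasure μ[|B] := ProbabilityTheory.cond_isProbabilityMeasure hB₀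
  have separation : ENNReal.ofReal r ≤
      optTransportCost dist μ μ[|closure A] + optTransportCost dist μ μ[|B] := by
    refine le_optTransportCost_add_of_le_infEDist (A := A) μ
      (ProbabilityTheory.ae_cond_mem isClosed_closure.measurableSet) ?_
    filter_upwards [ProbabilityTheory.ae_cond_mem hB] with x hx
    exact (lt_of_not_ge fun hle => hx hle).le
  refine (hα.1 ?_).trans (hT1.apply_optTransportCost_cond_le hB hB₀ (measure_ne_top _ _))
  rw [ENNReal.ofReal_sub _ (generalizedInverse_nonneg _ _), tsub_le_iff_left]
  exact separation.trans
    (add_le_add_left (hT1.optTransportCost_cond_closure_le hα hα_top hA₀ hA₁) _)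

end T1Inequality

theorem T1_concentration_general
    {X : Type*} [PseudoMetricSpace X] [MeasurableSpace X] [OpensMeasurableSpace X]
    {μ : Measure X} [IsProbabilityMeasure μ] {α : ℝ≥0∞ → ℝ≥0∞} (hα : ClassCFun α)
    (hunb : ∀ r : ℝ, ∃ v : ℝ≥0∞, ENNReal.ofReal r < α v) (hT1 : T1Inequality α μ)
    {A : Set X} (hA₀ : μ A ≠ 0) :
    ∀ r : ℝ, generalizedInverse α (ENNReal.ofReal (-Real.log (μ A).toReal)) ≤ r →
      1 - (expEN (α (ENNReal.ofReal
          (r - generalizedInverse α (ENNReal.ofReal (-Real.log (μ A).toReal))))))⁻¹ ≤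
        μ (Metric.cthickening r A) := by
  rintro r -
  have hα_top : α ⊤ = ⊤ := apply_top_eq_top_of_unbounded hα.1 hunb
  have hAr : MeasurableSet (Metric.cthickening r A) := Metric.isClosed_cthickening.measurableSet
  rw [← compl_compl (Metric.cthickening r A), prob_compl_eq_one_sub hAr.compl]
  refine tsub_le_tsub_left ?_ 1
  rcases eq_or_ne (μ (Metric.cthickening r A)ᶜ) 0 with hB₀ | hB₀
  · exact hB₀ ▸ zero_le
  · exact le_inv_expEN_of_le_neg_log prob_le_one
      (hT1.apply_sub_generalizedInverse_le hα hα_top hA₀ hB₀)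

/-- Marton-type concentration of measure from a `T₁`-inequality. -/
theorem T1_concentration
    {X : Type*} [MetricSpace X] [PolishSpace X] [MeasurableSpace X] [BorelSpace X]
    (μ : Measure X) [IsProbabilityMeasure μ]
    (hmom : ∀ x₀ : X, ∫⁻ x, ENNReal.ofReal (dist x₀ x) ∂μ < ⊤)
    (α : ℝ≥0∞ → ℝ≥0∞) (hα : ClassCFun α)
    (hunb : ∀ r : ℝ, ∃ v : ℝ≥0∞, ENNReal.ofReal r < α v)
    (hT1 : ∀ ν : Measure X, IsProbabilityMeasure ν →
      α (optTransportCost (fun x y => dist x y) μ ν) ≤ relEntropy ν μ)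
    (A : Set X) (hA : MeasurableSet A) (hApos : 0 < μ A)
    (rA : ℝ)
    (hrA : rA = sInf {r : ℝ | 0 ≤ r ∧
      ENNReal.ofReal (-Real.log (μ A).toReal) ≤ α (ENNReal.ofReal r)}) :
    ∀ r : ℝ, rA ≤ r →
      1 - (expEN (α (ENNReal.ofReal (r - rA))))⁻¹ ≤ μ (Metric.cthickening r A) :=
  hrA ▸ T1_concentration_general hα hunb hT1 hApos.ne'

end
end
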